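/- Let β ≥ 4 be a real number and c ≥ 8 a real number. There exists n₀ (depending on β and c) such that for every integer n ≥ n₀ and every positive integer m with m = βn/log n, if n balls are thrown independently and uniformly at random into m bins and X₁ denotes the number of bins containing exactly one ball, then Pr[X₁ ≥ n^{1−1/β}/(4 log n)] ≥ 1 − n^{−c}. -/

import Mathlib

/-!
The expected number of singleton bins is `n (1 - 1/m)^(n-1)`, which for `m = β n / log n` is at
least `n^(1-1/β) / e` once `n ≤ m (m - 1)` (`exp_le_mean_factor`, `sum_singletonBins`).  Moving one
ball changes the number of singleton bins by at most `2` (`abs_singletonBins_update_sub_le`), so the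
bounded differences inequality (`card_lower_tail_le`) shows that the probability of falling below
the mean by `t` is at most `exp (-t² / (8 n))`.  The threshold `n^(1-1/β) / (4 log n)` lies below
the mean by at least `t = n^(1-1/β) / 8`, and `t² / (8 n) = n^(1-2/β) / 512 ≥ √n / 512` eventually
exceeds `c log n`.

The bounded differences inequality is proved by induction on the number of coordinates for the
moment generating function (`sum_exp_sub_mean_le`), using Hoeffding's lemma on a finite uniform
space (`sum_exp_le_of_sum_eq_zero`).
-/

open scoped Classical

/-- The number of bins containing exactly one ball, when the `n` balls land according to `ω`. -/
def singletonBins (n m : ℕ) (ω : Fin n → Fin m) : ℕ :=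
  (Finset.univ.filter fun j : Fin m =>
    (Finset.univ.filter fun i : Fin n => ω i = j).card = 1).card

/-- Hoeffding's lemma for the uniform measure on a finite set: a centred variable bounded by `K` is
sub-Gaussian with variance proxy `K²`. -/
lemma sum_exp_le_of_sum_eq_zero {ι : Type*} [Fintype ι] (x : ι → ℝ) (K s : ℝ) (hK : 0 < K)
    (hx : ∀ i, |x i| ≤ K) (h0 : ∑ i, x i = 0) :
    ∑ i, Real.exp (s * x i) ≤ Fintype.card ι * Real.exp (s ^ 2 * K ^ 2 / 2) := by
  -- Convexity of `exp` between the endpoints `-s K` and `s K`.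
  have key : ∀ i, Real.exp (s * x i) ≤ Real.cosh (s * K) + x i / K * Real.sinh (s * K) := by
    intro i
    obtain ⟨h1, h2⟩ := abs_le.mp (hx i)
    have hc := convexOn_exp.2 (Set.mem_univ (-(s * K))) (Set.mem_univ (s * K))
      (show 0 ≤ (1 - x i / K) / 2 by
          have : x i / K ≤ 1 := (div_le_one hK).2 h2
          linarith)
      (show 0 ≤ (1 + x i / K) / 2 by
          have : -1 ≤ x i / K := by rw [le_div_iff₀ hK]; linarith
          linarith) (by ring)
    simp only [smul_eq_mul] at hc
    have e : (1 - x i / K) / 2 * -(s * K) + (1 + x i / K) / 2 * (s * K) = s * x i := by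
      field_simp; ring
    rw [e] at hc
    rw [Real.cosh_eq, Real.sinh_eq]
    linarith
  calc ∑ i, Real.exp (s * x i) ≤ ∑ i, (Real.cosh (s * K) + x i / K * Real.sinh (s * K)) :=
        Finset.sum_le_sum fun i _ => key i
    _ = Fintype.card ι * Real.cosh (s * K) := by
        rw [Finset.sum_add_distrib, ← Finset.sum_mul, ← Finset.sum_div, h0]
        simp
    _ ≤ _ := by
        gcongr
        have := Real.cosh_le_exp_half_sq (s * K)
        rwa [mul_pow] at this

lemma sum_fin_succ_fun {n m : ℕ} (F : (Fin (n + 1) → Fin m) → ℝ) :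
    ∑ ω, F ω = ∑ a : Fin m, ∑ η : Fin n → Fin m, F (Fin.cons a η) := by
  rw [← (Fin.consEquiv fun _ : Fin (n + 1) => Fin m).sum_comp, Fintype.sum_prod_type]
  rfl

/-- The sub-Gaussian bound behind the bounded differences inequality: if changing one coordinate
changes `f` by at most `K`, then `f` minus its mean has variance proxy `n K²`. -/
lemma sum_exp_sub_mean_le (m : ℕ) (hm : 0 < m) (K s : ℝ) (hK : 0 < K) (n : ℕ) :
    ∀ f : (Fin n → Fin m) → ℝ, (∀ ω i a, |f (Function.update ω i a) - f ω| ≤ K) →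
      ∑ ω, Real.exp (s * (f ω - (∑ ω', f ω') / (m : ℝ) ^ n)) ≤
        (m : ℝ) ^ n * Real.exp (n * (s ^ 2 * K ^ 2 / 2)) := by
  have hm' : (0 : ℝ) < m := by exact_mod_cast hm
  induction n with
  | zero => intro f _; simp
  | succ n ih =>
    intro f hf
    -- `g a` is the conditional mean of `f` given that the first coordinate is `a`.
    set g : Fin m → ℝ := fun a => (∑ η : Fin n → Fin m, f (Fin.cons a η)) / (m : ℝ) ^ n with hg
    set A : ℝ := (∑ ω', f ω') / (m : ℝ) ^ (n + 1) with hA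
    have hAg : A = (∑ a, g a) / m := by
      rw [hA, hg, sum_fin_succ_fun, ← Finset.sum_div, div_div, pow_succ]
    have hgg : ∀ a b, |g a - g b| ≤ K := by
      intro a b
      have hpos : (0 : ℝ) < (m : ℝ) ^ n := by positivity
      rw [hg]
      simp only
      rw [← sub_div, ← Finset.sum_sub_distrib, abs_div, abs_of_pos hpos, div_le_iff₀ hpos]
      calc _ ≤ ∑ η : Fin n → Fin m, |f (Fin.cons a η) - f (Fin.cons b η)| :=
            Finset.abs_sum_le_sum_abs _ _
        _ ≤ ∑ η : Fin n → Fin m, K := by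
            refine Finset.sum_le_sum fun η _ => ?_
            have := hf (Fin.cons b η) 0 a
            rwa [Fin.update_cons_zero] at this
        _ = K * (m : ℝ) ^ n := by simp [mul_comm]
    have hgA : ∀ a, |g a - A| ≤ K := by
      intro a
      have e : g a - A = (∑ b, (g a - g b)) / m := by
        rw [hAg, Finset.sum_sub_distrib]
        simp
        field_simp
      rw [e, abs_div, abs_of_pos hm', div_le_iff₀ hm']
      calc _ ≤ ∑ b, |g a - g b| := Finset.abs_sum_le_sum_abs _ _
        _ ≤ ∑ b : Fin m, K := Finset.sum_le_sum fun b _ => hgg a b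
        _ = K * m := by simp [mul_comm]
    have h0 : ∑ a, (g a - A) = 0 := by
      rw [Finset.sum_sub_distrib, hAg]
      simp
      field_simp
      simp
    have hH := sum_exp_le_of_sum_eq_zero (fun a => g a - A) K s hK hgA h0
    rw [Fintype.card_fin] at hH
    calc ∑ ω, Real.exp (s * (f ω - A))
        = ∑ a, Real.exp (s * (g a - A)) *
            ∑ η : Fin n → Fin m, Real.exp (s * (f (Fin.cons a η) - g a)) := by
          rw [sum_fin_succ_fun]
          refine Finset.sum_congr rfl fun a _ => ?_
          rw [Finset.mul_sum]
          refine Finset.sum_congr rfl fun η _ => ?_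
          rw [← Real.exp_add]
          congr 1
          ring
      _ ≤ ∑ a, Real.exp (s * (g a - A)) *
            ((m : ℝ) ^ n * Real.exp (n * (s ^ 2 * K ^ 2 / 2))) := by
          refine Finset.sum_le_sum fun a _ => ?_
          refine mul_le_mul_of_nonneg_left ?_ (Real.exp_pos _).le
          refine ih (fun η => f (Fin.cons a η)) fun η i b => ?_
          have := hf (Fin.cons a η) i.succ b
          rwa [← Fin.cons_update] at this
      _ = (∑ a, Real.exp (s * (g a - A))) *
            ((m : ℝ) ^ n * Real.exp (n * (s ^ 2 * K ^ 2 / 2))) := by rw [Finset.sum_mul]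
      _ ≤ (m * Real.exp (s ^ 2 * K ^ 2 / 2)) *
            ((m : ℝ) ^ n * Real.exp (n * (s ^ 2 * K ^ 2 / 2))) := by
          gcongr
      _ = _ := by
          have : ((n + 1 : ℕ) : ℝ) * (s ^ 2 * K ^ 2 / 2)
              = s ^ 2 * K ^ 2 / 2 + n * (s ^ 2 * K ^ 2 / 2) := by push_cast; ring
          rw [this, Real.exp_add]
          ring

/-- Lower tail of the bounded differences inequality, with differences at most `2`. -/
lemma card_lower_tail_le (n m : ℕ) (hn : 0 < n) (hm : 0 < m) (f : (Fin n → Fin m) → ℝ)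
    (hf : ∀ ω i a, |f (Function.update ω i a) - f ω| ≤ 2) (t τ : ℝ) (ht : 0 ≤ t)
    (hτ : τ + t ≤ (∑ ω, f ω) / (m : ℝ) ^ n) :
    ((Finset.univ.filter fun ω => f ω < τ).card : ℝ) ≤
      (m : ℝ) ^ n * Real.exp (-(t ^ 2 / (8 * n))) := by
  have hn' : (0 : ℝ) < n := by exact_mod_cast hn
  -- The optimal Chernoff parameter.
  set s : ℝ := t / (4 * n) with hs
  have hs0 : 0 ≤ s := by positivity
  have h := sum_exp_sub_mean_le m hm 2 (-s) two_pos n f hf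
  have h2 : ((Finset.univ.filter fun ω => f ω < τ).card : ℝ) * Real.exp (s * t) ≤
      ∑ ω, Real.exp (-s * (f ω - (∑ ω', f ω') / (m : ℝ) ^ n)) := by
    rw [← nsmul_eq_mul]
    refine (Finset.card_nsmul_le_sum _
      (fun ω => Real.exp (-s * (f ω - (∑ ω', f ω') / (m : ℝ) ^ n))) _ fun ω hω => ?_).trans
      (Finset.sum_le_sum_of_subset_of_nonneg (Finset.filter_subset _ _)
        fun _ _ _ => (Real.exp_pos _).le)
    have hω' := (Finset.mem_filter.mp hω).2
    apply Real.exp_le_exp.mpr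
    nlinarith
  have h3 := h2.trans h
  rw [← le_div_iff₀ (Real.exp_pos _), mul_div_assoc, ← Real.exp_sub] at h3
  have e : (n : ℝ) * ((-s) ^ 2 * 2 ^ 2 / 2) - s * t = -(t ^ 2 / (8 * n)) := by
    rw [hs]; field_simp; ring
  rwa [e] at h3

lemma singletonBins_le_update_add_two {n m : ℕ} (ω ω' : Fin n → Fin m) (i : Fin n)
    (h : ∀ k, k ≠ i → ω' k = ω k) : singletonBins n m ω ≤ singletonBins n m ω' + 2 := by
  unfold singletonBins
  have hsub : (Finset.univ.filter fun j : Fin m =>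
      (Finset.univ.filter fun i : Fin n => ω i = j).card = 1) ⊆
      (Finset.univ.filter fun j : Fin m =>
      (Finset.univ.filter fun i : Fin n => ω' i = j).card = 1) ∪ {ω i, ω' i} := by
    intro j hj
    by_cases h1 : j = ω i
    · simp [h1]
    by_cases h2 : j = ω' i
    · simp [h2]
    have e : (Finset.univ.filter fun k : Fin n => ω' k = j) =
        (Finset.univ.filter fun k : Fin n => ω k = j) := by
      ext k
      by_cases hk : k = i
      · subst hk; simp [Ne.symm h1, Ne.symm h2]
      · simp [h k hk]
    simp only [Finset.mem_union, Finset.mem_filter, Finset.mem_univ, true_and] at hj ⊢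
    left
    rw [e]; exact hj
  exact (Finset.card_le_card hsub).trans
    ((Finset.card_union_le _ _).trans (Nat.add_le_add_left Finset.card_le_two _))

lemma abs_singletonBins_update_sub_le {n m : ℕ} (ω : Fin n → Fin m) (i : Fin n) (a : Fin m) :
    |(singletonBins n m (Function.update ω i a) : ℝ) - singletonBins n m ω| ≤ 2 := by
  have h1 := singletonBins_le_update_add_two ω (Function.update ω i a) i
    fun k hk => by simp [hk]
  have h2 := singletonBins_le_update_add_two (Function.update ω i a) ω i
    fun k hk => by simp [hk]
  rw [abs_le]
  have h1' : (singletonBins n m ω : ℝ) ≤ singletonBins n m (Function.update ω i a) + 2 := by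
    exact_mod_cast h1
  have h2' : (singletonBins n m (Function.update ω i a) : ℝ) ≤ singletonBins n m ω + 2 := by
    exact_mod_cast h2
  constructor <;> linarith

lemma card_only_ball (n m : ℕ) (i : Fin n) (j : Fin m) :
    (Finset.univ.filter fun ω : Fin n → Fin m =>
      (Finset.univ.filter fun k : Fin n => ω k = j) = {i}).card = (m - 1) ^ (n - 1) := by
  have e : (Finset.univ.filter fun ω : Fin n → Fin m =>
      (Finset.univ.filter fun k : Fin n => ω k = j) = {i}) =
      Fintype.piFinset fun k : Fin n => if k = i then {j} else {j}ᶜ := by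
    ext ω
    simp only [Finset.mem_filter, Finset.mem_univ, true_and, Fintype.mem_piFinset,
      Finset.ext_iff, Finset.mem_singleton]
    refine forall_congr' fun k => ?_
    by_cases hk : k = i <;> simp [hk]
  rw [e, Fintype.card_piFinset, ← Finset.mul_prod_erase _ _ (Finset.mem_univ i)]
  rw [Finset.prod_congr rfl (g := fun _ => m - 1)]
  · simp
  · intro k hk
    simp [Finset.ne_of_mem_erase hk, Finset.card_compl]

lemma sum_singletonBins (n m : ℕ) :
    ∑ ω : Fin n → Fin m, singletonBins n m ω = m * (n * (m - 1) ^ (n - 1)) := by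
  have h : ∀ ω : Fin n → Fin m, singletonBins n m ω = ∑ j : Fin m, ∑ i : Fin n,
      if (Finset.univ.filter fun k : Fin n => ω k = j) = {i} then 1 else 0 := by
    intro ω
    unfold singletonBins
    rw [Finset.card_filter]
    refine Finset.sum_congr rfl fun j _ => ?_
    split_ifs with hc
    · obtain ⟨i, hi⟩ := Finset.card_eq_one.mp hc
      simp [hi]
    · refine (Finset.sum_eq_zero fun i _ => if_neg fun hi => hc ?_).symm
      rw [hi]; simp
  simp_rw [h]
  rw [Finset.sum_comm]
  have h2 : ∀ j : Fin m, ∑ ω : Fin n → Fin m, ∑ i : Fin n,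
      (if (Finset.univ.filter fun k : Fin n => ω k = j) = {i} then 1 else 0)
      = n * (m - 1) ^ (n - 1) := by
    intro j
    rw [Finset.sum_comm]
    simp_rw [← Finset.card_filter, card_only_ball]
    simp
  simp_rw [h2]
  simp

/-- The probability that a given ball is alone, bounded below through
`1 - 1/m ≥ exp (-1/(m-1))`. -/
lemma exp_le_mean_factor (n m : ℕ) (hn : 1 ≤ n) (hm : 2 ≤ m)
    (hnm : (n : ℝ) ≤ m * (m - 1)) :
    Real.exp (-(n / m : ℝ)) * Real.exp (-1) ≤ ((m - 1 : ℝ) / m) ^ (n - 1) := by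
  have hm' : (2 : ℝ) ≤ m := by exact_mod_cast hm
  have hm1 : (0 : ℝ) < m - 1 := by linarith
  have h1 : Real.exp (-(1 / (m - 1 : ℝ))) ≤ (m - 1 : ℝ) / m := by
    rw [Real.exp_neg, inv_le_comm₀ (Real.exp_pos _) (by positivity), inv_div]
    have := Real.add_one_le_exp (1 / (m - 1 : ℝ))
    have e : (m : ℝ) / (m - 1) = 1 / (m - 1) + 1 := by field_simp; ring
    rwa [e]
  refine le_trans ?_ (pow_le_pow_left₀ (Real.exp_pos _).le h1 _)
  rw [← Real.exp_nat_mul, ← Real.exp_add]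
  apply Real.exp_le_exp.mpr
  rw [Nat.cast_sub hn]
  push_cast
  have h2 : ((n : ℝ) - 1) / (m - 1) ≤ n / m + 1 := by
    rw [div_add_one (by linarith), div_le_div_iff₀ hm1 (by linarith)]
    nlinarith
  have e : ((n : ℝ) - 1) * -(1 / (m - 1)) = -(((n : ℝ) - 1) / (m - 1)) := by ring
  rw [e]
  linarith

lemma eventually_large (c : ℝ) : ∃ n₀ : ℕ, ∀ n : ℕ, n₀ ≤ n →
    2 ≤ Real.log n ∧ Real.log n ≤ (n : ℝ) ^ (1 / 2 : ℝ) ∧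
      512 * c * Real.log n ≤ (n : ℝ) ^ (1 / 2 : ℝ) := by
  have key : ∀ C : ℝ, ∀ᶠ n : ℕ in Filter.atTop, C * Real.log n ≤ (n : ℝ) ^ (1 / 2 : ℝ) := by
    intro C
    have h := ((isLittleO_log_rpow_atTop (r := 1 / 2) (by norm_num)).const_mul_left C).bound
      one_pos
    have h' := (tendsto_natCast_atTop_atTop (R := ℝ)).eventually h
    filter_upwards [h'] with n hn
    rw [one_mul, Real.norm_eq_abs, Real.norm_eq_abs,
      abs_of_nonneg (a := (n : ℝ) ^ (1 / 2 : ℝ)) (by positivity)] at hn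
    exact (le_abs_self _).trans hn
  have h2 := (Real.tendsto_log_atTop.comp
    (tendsto_natCast_atTop_atTop (R := ℝ))).eventually_ge_atTop 2
  have h3 := key 1
  simp only [one_mul] at h3
  exact Filter.eventually_atTop.mp (h2.and (h3.and (key (512 * c))))

/-- For `β ≥ 4` and `c ≥ 8`, for all sufficiently large `n`, throwing `n` balls uniformly and
independently into `m = β n / log n` bins, the number `X₁` of bins with exactly one ball
satisfies `X₁ ≥ n^{1-1/β}/(4 log n)` with probability at least `1 - n^{-c}`; probability is
the fraction of the `m^n` equally likely outcomes for which the event holds. -/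
theorem stmt_5 (β c : ℝ) (hβ : 4 ≤ β) (hc : 8 ≤ c) :
    ∃ n₀ : ℕ, ∀ n : ℕ, n₀ ≤ n → ∀ m : ℕ, 0 < m →
      (m : ℝ) = β * n / Real.log n →
      1 - (n : ℝ) ^ (-c) ≤
        ((Finset.univ.filter fun ω : Fin n → Fin m =>
              (n : ℝ) ^ ((1 : ℝ) - 1 / β) / (4 * Real.log n)
                ≤ (singletonBins n m ω : ℝ)).card : ℝ)
          / (m : ℝ) ^ n := by
  obtain ⟨n₀, hn₀⟩ := eventually_large c
  refine ⟨max n₀ 1, fun n hn m hm hmeq => ?_⟩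
  obtain ⟨hlog2, hlogsqrt, hclog⟩ := hn₀ n (le_of_max_le_left hn)
  have hn1 : 1 ≤ n := le_of_max_le_right hn
  have hn1' : (1 : ℝ) ≤ n := by exact_mod_cast hn1
  have hn0 : (0 : ℝ) < n := by linarith
  have hm0 : (0 : ℝ) < m := by exact_mod_cast hm
  have hL : 0 < Real.log n := by linarith
  have hβ0 : 0 < β := by linarith
  set r : ℝ := (n : ℝ) ^ (1 / 2 : ℝ) with hr
  have hr1 : 1 ≤ r := Real.one_le_rpow hn1' (by norm_num)
  have hrr : r * r = n := by
    rw [hr, ← Real.rpow_add hn0]; norm_num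
  -- The number of bins is at least `4 √n`.
  have hmr : 4 * r ≤ m := by
    rw [hmeq, le_div_iff₀ hL]
    calc 4 * r * Real.log n ≤ 4 * r * r := by gcongr
      _ = 4 * n := by rw [mul_assoc, hrr]
      _ ≤ β * n := by gcongr
  have hm2 : 2 ≤ m := by
    have : (2 : ℝ) ≤ m := by linarith
    exact_mod_cast this
  have hnm : (n : ℝ) ≤ m * (m - 1) := by nlinarith
  set P : ℝ := (n : ℝ) ^ ((1 : ℝ) - 1 / β) with hP
  have hP0 : 0 < P := by positivity
  have hPexp : (n : ℝ) * Real.exp (-(n / m : ℝ)) = P := by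
    have e : (n / m : ℝ) = Real.log n * (1 / β) := by
      rw [hmeq]; field_simp
    rw [hP, Real.rpow_sub hn0, Real.rpow_one, Real.rpow_def_of_pos hn0, e, Real.exp_neg]
    rfl
  have hmean : (∑ ω : Fin n → Fin m, (singletonBins n m ω : ℝ)) / (m : ℝ) ^ n =
      n * ((m - 1 : ℝ) / m) ^ (n - 1) := by
    rw [← Nat.cast_sum, sum_singletonBins]
    push_cast [Nat.cast_sub (show 1 ≤ m by omega)]
    have e : (m : ℝ) ^ n = m * (m : ℝ) ^ (n - 1) := by
      rw [← pow_succ', Nat.sub_add_cancel hn1]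
    rw [e, div_pow]
    field_simp
  have hthr : P / (4 * Real.log n) + P / 8 ≤
      (∑ ω : Fin n → Fin m, (singletonBins n m ω : ℝ)) / (m : ℝ) ^ n := by
    rw [hmean]
    have h1 : P / (4 * Real.log n) ≤ P / 8 := by
      apply div_le_div_of_nonneg_left hP0.le (by norm_num); linarith
    have h2 : (1 / 3 : ℝ) ≤ Real.exp (-1) := by
      rw [Real.exp_neg, one_div]
      exact inv_anti₀ (Real.exp_pos _) (by linarith [Real.exp_one_lt_d9])
    have h3 := mul_le_mul_of_nonneg_left (exp_le_mean_factor n m hn1 hm2 hnm) hn0.le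
    rw [← mul_assoc, hPexp] at h3
    nlinarith
  have htail := card_lower_tail_le n m hn1 hm (fun ω => (singletonBins n m ω : ℝ))
    (fun ω i a => abs_singletonBins_update_sub_le ω i a) (P / 8) (P / (4 * Real.log n))
    (by positivity) hthr
  -- Since `β ≥ 4`, `P² / n = n^(1-2/β) ≥ √n`.
  have hPsq : r * n ≤ P ^ 2 := by
    have e1 : r * n = (n : ℝ) ^ (3 / 2 : ℝ) := by
      rw [hr, ← Real.rpow_add_one hn0.ne']; norm_num
    have e2 : P ^ 2 = (n : ℝ) ^ ((1 - 1 / β) * 2) := by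
      rw [hP, Real.rpow_mul hn0.le]; norm_num
    rw [e1, e2]
    apply Real.rpow_le_rpow_of_exponent_le hn1'
    have : 1 / β ≤ 1 / 4 := one_div_le_one_div_of_le (by norm_num) hβ
    linarith
  have hexp : Real.exp (-((P / 8) ^ 2 / (8 * n))) ≤ (n : ℝ) ^ (-c) := by
    rw [Real.rpow_def_of_pos hn0]
    apply Real.exp_le_exp.mpr
    have : Real.log n * c ≤ (P / 8) ^ 2 / (8 * n) := by
      rw [le_div_iff₀ (by positivity)]
      nlinarith
    linarith
  have hsplit := Finset.card_filter_add_card_filter_not (s := (Finset.univ : Finset (Fin n → Fin m)))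
    (fun ω => P / (4 * Real.log n) ≤ (singletonBins n m ω : ℝ))
  simp only [not_le] at hsplit
  rw [Finset.card_univ, Fintype.card_fun, Fintype.card_fin, Fintype.card_fin] at hsplit
  have hsplit' : ((Finset.univ.filter fun ω : Fin n → Fin m =>
        P / (4 * Real.log n) ≤ (singletonBins n m ω : ℝ)).card : ℝ) +
      ((Finset.univ.filter fun ω : Fin n → Fin m =>
        (singletonBins n m ω : ℝ) < P / (4 * Real.log n)).card : ℝ) = (m : ℝ) ^ n := by
    exact_mod_cast hsplit
  have hpow : (0 : ℝ) < (m : ℝ) ^ n := by positivity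
  rw [le_div_iff₀ hpow]
  have := htail.trans (mul_le_mul_of_nonneg_left hexp hpow.le)
  linarith
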